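/- arXiv:1707.07739 — 2 statements merged into one kernel-verified Lean document; each statement's English description precedes it below -/
import Mathlib

section
/- (Convolution, independent case.) Let θ > 0 and let U₁ and U₂ be two stochastically independent service processes on a common probability space, MGF-bounded for θ with bounding functions (ρ₁, σ₁) and (ρ₂, σ₂) respectively, and assume ρ₁(θ) ≠ ρ₂(θ). Then the min-plus convolution U₁ ⊗ U₂, defined by (U₁ ⊗ U₂)(s,t) := min_{s≤r≤t} (U₁(s,r) + U₂(r,t)), is MGF-bounded for θ with bounding functions ρ(θ) = max(ρ₁(θ), ρ₂(θ)) and σ(θ) = σ₁(θ) + σ₂(θ) − (1/θ)·log(1 − e^{−θ|ρ₁(θ) − ρ₂(θ)|}); that is, E[e^{−θ(U₁⊗U₂)(s,t)}] ≤ e^{θ max(ρ₁(θ),ρ₂(θ))(t−s) + θσ(θ)} for all s ≤ t. -/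
open MeasureTheory ProbabilityTheory

/-!
The minimum defining `(U₁ ⊗ U₂)(s,t)` is attained, so `e^{-θ (U₁ ⊗ U₂)(s,t)}` is at most the sum
over `s ≤ r ≤ t` of `e^{-θ U₁(s,r)} e^{-θ U₂(r,t)}`. Independence factorizes the expectation of each
term, and the MGF bounds leave `e^{θ(σ₁+σ₂)} ∑ᵣ x^{r-s} y^{t-r}` with `x = e^{θρ₁} ≠ y = e^{θρ₂}`.
This two-variable geometric sum is at most `max(x,y)^{t-s} / (1 - min(x,y)/max(x,y))`, and the ratio
of the minimum to the maximum is `e^{-θ|ρ₁-ρ₂|}`.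
-/

open scoped ENNReal

section GeometricSum

variable {K : Type*} [Field K] [LinearOrder K] [IsStrictOrderedRing K] {x y : K}

theorem geom_sum₂_le_of_gt (hy : 0 ≤ y) (hxy : y < x) (n : ℕ) :
    ∑ i ∈ Finset.range (n + 1), x ^ i * y ^ (n - i) ≤ x ^ n / (1 - y / x) := by
  have hx : 0 < x := hy.trans_lt hxy
  calc ∑ i ∈ Finset.range (n + 1), x ^ i * y ^ (n - i)
      = (x ^ (n + 1) - y ^ (n + 1)) / (x - y) := geom₂_sum hxy.ne' (n + 1)
    _ ≤ x ^ (n + 1) / (x - y) :=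
        div_le_div_of_nonneg_right (sub_le_self _ (pow_nonneg hy _)) (sub_nonneg.mpr hxy.le)
    _ = x ^ n / (1 - y / x) := by
        rw [one_sub_div hx.ne', div_div_eq_mul_div, pow_succ]

theorem geom_sum₂_le_of_ne (hx : 0 ≤ x) (hy : 0 ≤ y) (hxy : x ≠ y) (n : ℕ) :
    ∑ i ∈ Finset.range (n + 1), x ^ i * y ^ (n - i)
      ≤ max x y ^ n / (1 - min x y / max x y) := by
  rcases hxy.lt_or_gt with h | h
  · rw [max_eq_right h.le, min_eq_left h.le]
    exact (geom_sum₂_comm x y (n + 1)).trans_le (geom_sum₂_le_of_gt hx h n)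
  · rw [max_eq_left h.le, min_eq_right h.le]
    exact geom_sum₂_le_of_gt hy h n

theorem min_exp_div_max_exp (a b : ℝ) :
    min (Real.exp a) (Real.exp b) / max (Real.exp a) (Real.exp b) = Real.exp (-|a - b|) := by
  rw [← Real.exp_monotone.map_min, ← Real.exp_monotone.map_max, ← Real.exp_sub,
    ← max_sub_min_eq_abs, max_comm, min_comm, neg_sub]

theorem sum_Icc_exp_le {a b : ℝ} (hab : a ≠ b) {s t : ℕ} (hst : s ≤ t) :
    ∑ r ∈ Finset.Icc s t, Real.exp (a * ((r : ℝ) - s) + b * ((t : ℝ) - r))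
      ≤ Real.exp (max a b * ((t : ℝ) - s)) / (1 - Real.exp (-|a - b|)) := by
  obtain ⟨n, rfl⟩ := Nat.exists_eq_add_of_le hst
  calc ∑ r ∈ Finset.Icc s (s + n), Real.exp (a * ((r : ℝ) - s) + b * (((s + n : ℕ) : ℝ) - r))
      = ∑ i ∈ Finset.range (n + 1), Real.exp a ^ i * Real.exp b ^ (n - i) := by
        rw [← Finset.Ico_add_one_right_eq_Icc, Finset.sum_Ico_eq_sum_range, add_assoc,
          Nat.add_sub_cancel_left]
        refine Finset.sum_congr rfl fun i hi => ?_
        rw [← Real.exp_nat_mul, ← Real.exp_nat_mul, ← Real.exp_add,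
          Nat.cast_sub (Finset.mem_range_succ_iff.mp hi)]
        push_cast
        ring_nf
    _ ≤ max (Real.exp a) (Real.exp b) ^ n
          / (1 - min (Real.exp a) (Real.exp b) / max (Real.exp a) (Real.exp b)) :=
        geom_sum₂_le_of_ne (Real.exp_pos a).le (Real.exp_pos b).le
          (Real.exp_injective.ne hab) n
    _ = Real.exp (max a b * (((s + n : ℕ) : ℝ) - s)) / (1 - Real.exp (-|a - b|)) := by
        rw [min_exp_div_max_exp, ← Real.exp_monotone.map_max, ← Real.exp_nat_mul,
          Nat.cast_add, add_sub_cancel_left, mul_comm]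

theorem sum_Icc_exp_mul_exp_le {θ ρ₁ ρ₂ : ℝ} (hθ : 0 < θ) (hne : ρ₁ ≠ ρ₂) (σ₁ σ₂ : ℝ)
    {s t : ℕ} (hst : s ≤ t) :
    ∑ r ∈ Finset.Icc s t, Real.exp (θ * ρ₁ * ((r : ℝ) - s) + θ * σ₁)
        * Real.exp (θ * ρ₂ * ((t : ℝ) - r) + θ * σ₂)
      ≤ Real.exp (θ * max ρ₁ ρ₂ * ((t : ℝ) - s)
          + θ * (σ₁ + σ₂ - 1 / θ * Real.log (1 - Real.exp (-θ * |ρ₁ - ρ₂|)))) := by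
  have hgap : -|θ * ρ₁ - θ * ρ₂| = -θ * |ρ₁ - ρ₂| := by
    rw [← mul_sub, abs_mul, abs_of_pos hθ, neg_mul]
  have hpos : 0 < 1 - Real.exp (-θ * |ρ₁ - ρ₂|) :=
    sub_pos.mpr <| Real.exp_lt_one_iff.mpr <|
      mul_neg_of_neg_of_pos (neg_lt_zero.mpr hθ) (abs_sub_pos.mpr hne)
  calc ∑ r ∈ Finset.Icc s t, Real.exp (θ * ρ₁ * ((r : ℝ) - s) + θ * σ₁)
        * Real.exp (θ * ρ₂ * ((t : ℝ) - r) + θ * σ₂)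
      = Real.exp (θ * (σ₁ + σ₂)) * ∑ r ∈ Finset.Icc s t,
          Real.exp (θ * ρ₁ * ((r : ℝ) - s) + θ * ρ₂ * ((t : ℝ) - r)) := by
        simp only [Finset.mul_sum, ← Real.exp_add]
        refine Finset.sum_congr rfl fun r _ => congrArg Real.exp ?_
        ring
    _ ≤ Real.exp (θ * (σ₁ + σ₂)) * (Real.exp (θ * max ρ₁ ρ₂ * ((t : ℝ) - s))
          / (1 - Real.exp (-θ * |ρ₁ - ρ₂|))) := by
        rw [mul_max_of_nonneg _ _ hθ.le, ← hgap]
        gcongr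
        exact sum_Icc_exp_le ((mul_right_injective₀ hθ.ne').ne hne) hst
    _ = Real.exp (θ * max ρ₁ ρ₂ * ((t : ℝ) - s)
          + θ * (σ₁ + σ₂ - 1 / θ * Real.log (1 - Real.exp (-θ * |ρ₁ - ρ₂|)))) := by
        rw [mul_sub θ (σ₁ + σ₂), ← mul_assoc θ, mul_one_div_cancel hθ.ne', one_mul,
          ← add_sub_assoc, Real.exp_sub, Real.exp_log hpos, Real.exp_add, mul_div_assoc', mul_comm]

end GeometricSum

theorem apply_sInf_image_le_sum {ι α N : Type*} [ConditionallyCompleteLinearOrder α]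
    [AddCommMonoid N] [PartialOrder N] [IsOrderedAddMonoid N] [CanonicallyOrderedAdd N]
    {S : Finset ι} (hS : S.Nonempty) (f : ι → α) (g : α → N) :
    g (sInf (f '' S)) ≤ ∑ i ∈ S, g (f i) := by
  obtain ⟨i, hi, hmin⟩ := (hS.to_set.image f).csInf_mem (S.finite_toSet.image f)
  rw [← hmin]
  exact Finset.single_le_sum (f := fun i => g (f i)) (fun _ _ => zero_le) hi

section MomentGeneratingFunction

variable {Ω : Type*} [MeasurableSpace Ω] {P : Measure Ω}

/-- The moment generating function of `X` as a lower integral. Unlike `ProbabilityTheory.mgf`, it is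
`∞` rather than `0` where the exponential moment is infinite. -/
noncomputable def lmgf (X : Ω → ℝ) (P : Measure Ω) (τ : ℝ) : ℝ≥0∞ :=
  ∫⁻ ω, ENNReal.ofReal (Real.exp (τ * X ω)) ∂P

theorem lmgf_add_of_indepFun {X Y : Ω → ℝ} (hX : AEMeasurable X P) (hY : AEMeasurable Y P)
    (hXY : IndepFun X Y P) (τ : ℝ) :
    lmgf (fun ω => X ω + Y ω) P τ = lmgf X P τ * lmgf Y P τ := by
  have hexp : Measurable fun x : ℝ => ENNReal.ofReal (Real.exp (τ * x)) := by fun_prop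
  simp only [lmgf, mul_add, Real.exp_add, ENNReal.ofReal_mul (Real.exp_pos _).le]
  exact lintegral_mul_eq_lintegral_mul_lintegral_of_indepFun'' (hexp.comp_aemeasurable hX)
    (hexp.comp_aemeasurable hY) (hXY.comp hexp hexp)

theorem lmgf_sInf_image_le_sum {ι : Type*} {S : Finset ι} (hS : S.Nonempty) {X : ι → Ω → ℝ}
    (hX : ∀ i ∈ S, AEMeasurable (X i) P) (τ : ℝ) :
    lmgf (fun ω => sInf ((fun i => X i ω) '' S)) P τ ≤ ∑ i ∈ S, lmgf (X i) P τ := by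
  simp only [lmgf]
  rw [← lintegral_finsetSum' S fun i hi => by have := hX i hi; fun_prop]
  exact lintegral_mono fun ω =>
    apply_sInf_image_le_sum hS (fun i => X i ω) fun x => ENNReal.ofReal (Real.exp (τ * x))

end MomentGeneratingFunction

section ServiceProcess

variable {Ω : Type*}

/-- The min-plus convolution `(U₁ ⊗ U₂)(s,t)` of bivariate processes. For `s ≤ t` the infimum is the
minimum over the finite nonempty set `s ≤ r ≤ t`; for `t < s` it is the junk value `sInf ∅ = 0`. -/
noncomputable def minPlusConv (U₁ U₂ : ℕ → ℕ → Ω → ℝ) (s t : ℕ) (ω : Ω) : ℝ :=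
  sInf ((fun r => U₁ s r ω + U₂ r t ω) '' Set.Icc s t)

variable [MeasurableSpace Ω] {P : Measure Ω}

/-- The process `U` is MGF-bounded for `θ`; the real numbers `ρ` and `σ` are the values at this `θ`
of the bounding functions. -/
def IsMGFBounded (U : ℕ → ℕ → Ω → ℝ) (P : Measure Ω) (θ ρ σ : ℝ) : Prop :=
  ∀ s t : ℕ, s ≤ t →
    lmgf (U s t) P (-θ) ≤ ENNReal.ofReal (Real.exp (θ * ρ * ((t : ℝ) - s) + θ * σ))

theorem lmgf_minPlusConv_le_sum {U₁ U₂ : ℕ → ℕ → Ω → ℝ} {s t : ℕ} (hst : s ≤ t)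
    (hU₁ : ∀ r ∈ Finset.Icc s t, AEMeasurable (U₁ s r) P)
    (hU₂ : ∀ r ∈ Finset.Icc s t, AEMeasurable (U₂ r t) P)
    (hIndep : ∀ r ∈ Finset.Icc s t, IndepFun (U₁ s r) (U₂ r t) P) (τ : ℝ) :
    lmgf (minPlusConv U₁ U₂ s t) P τ
      ≤ ∑ r ∈ Finset.Icc s t, lmgf (U₁ s r) P τ * lmgf (U₂ r t) P τ := by
  calc lmgf (minPlusConv U₁ U₂ s t) P τ
      ≤ ∑ r ∈ Finset.Icc s t, lmgf (fun ω => U₁ s r ω + U₂ r t ω) P τ := by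
        unfold minPlusConv
        rw [← Finset.coe_Icc]
        exact lmgf_sInf_image_le_sum (Finset.nonempty_Icc.mpr hst)
          (fun r hr => (hU₁ r hr).add (hU₂ r hr)) τ
    _ = ∑ r ∈ Finset.Icc s t, lmgf (U₁ s r) P τ * lmgf (U₂ r t) P τ :=
        Finset.sum_congr rfl fun r hr =>
          lmgf_add_of_indepFun (hU₁ r hr) (hU₂ r hr) (hIndep r hr) τ

theorem convolution_independent_general {U₁ U₂ : ℕ → ℕ → Ω → ℝ} {θ ρ₁ σ₁ ρ₂ σ₂ : ℝ} (hθ : 0 < θ)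
    (hU₁meas : ∀ s t, s ≤ t → AEMeasurable (U₁ s t) P)
    (hU₂meas : ∀ s t, s ≤ t → AEMeasurable (U₂ s t) P)
    (hU₁ : IsMGFBounded U₁ P θ ρ₁ σ₁) (hU₂ : IsMGFBounded U₂ P θ ρ₂ σ₂) (hne : ρ₁ ≠ ρ₂)
    (hIndep : ∀ s r t, s ≤ r → r ≤ t → IndepFun (U₁ s r) (U₂ r t) P) :
    IsMGFBounded (minPlusConv U₁ U₂) P θ (max ρ₁ ρ₂)
      (σ₁ + σ₂ - 1 / θ * Real.log (1 - Real.exp (-θ * |ρ₁ - ρ₂|))) := by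
  intro s t hst
  calc lmgf (minPlusConv U₁ U₂ s t) P (-θ)
      ≤ ∑ r ∈ Finset.Icc s t, lmgf (U₁ s r) P (-θ) * lmgf (U₂ r t) P (-θ) :=
        lmgf_minPlusConv_le_sum hst
          (fun r hr => hU₁meas s r (Finset.mem_Icc.mp hr).1)
          (fun r hr => hU₂meas r t (Finset.mem_Icc.mp hr).2)
          (fun r hr => hIndep s r t (Finset.mem_Icc.mp hr).1 (Finset.mem_Icc.mp hr).2) (-θ)
    _ ≤ ∑ r ∈ Finset.Icc s t,
          ENNReal.ofReal (Real.exp (θ * ρ₁ * ((r : ℝ) - s) + θ * σ₁))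
            * ENNReal.ofReal (Real.exp (θ * ρ₂ * ((t : ℝ) - r) + θ * σ₂)) :=
        Finset.sum_le_sum fun r hr =>
          mul_le_mul' (hU₁ s r (Finset.mem_Icc.mp hr).1) (hU₂ r t (Finset.mem_Icc.mp hr).2)
    _ = ENNReal.ofReal (∑ r ∈ Finset.Icc s t, Real.exp (θ * ρ₁ * ((r : ℝ) - s) + θ * σ₁)
            * Real.exp (θ * ρ₂ * ((t : ℝ) - r) + θ * σ₂)) := by
        rw [ENNReal.ofReal_sum_of_nonneg fun _ _ => by positivity]
        simp only [ENNReal.ofReal_mul (Real.exp_pos _).le]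
    _ ≤ _ := ENNReal.ofReal_le_ofReal (sum_Icc_exp_mul_exp_le hθ hne σ₁ σ₂ hst)

end ServiceProcess

theorem indepFun_of_indep_iSup_comap {Ω ι κ : Type*} {β : ι → Type*} {γ : κ → Type*}
    [MeasurableSpace Ω] {P : Measure Ω} [mβ : ∀ i, MeasurableSpace (β i)]
    [mγ : ∀ j, MeasurableSpace (γ j)] {X : ∀ i, Ω → β i} {Y : ∀ j, Ω → γ j}
    (h : Indep (⨆ i, (mβ i).comap (X i)) (⨆ j, (mγ j).comap (Y j)) P) (i : ι) (j : κ) :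
    IndepFun (X i) (Y j) P :=
  (IndepFun_iff_Indep _ _ _).mpr <| indep_of_indep_of_le h
    (le_iSup (fun i => (mβ i).comap (X i)) i) (le_iSup (fun j => (mγ j).comap (Y j)) j)

/-- Convolution of two stochastically independent MGF-bounded service processes. -/
theorem convolution_independent
    {Ω : Type*} [MeasurableSpace Ω] (P : Measure Ω) [IsProbabilityMeasure P]
    (θ : ℝ) (hθ : 0 < θ)
    (U₁ U₂ : ℕ → ℕ → Ω → ℝ)
    (ρ₁ σ₁ ρ₂ σ₂ : ℝ)
    -- U₁ and U₂ are service processes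
    (hU₁meas : ∀ s t, Measurable (U₁ s t))
    (hU₁nonneg : ∀ s t, s ≤ t → ∀ ω, 0 ≤ U₁ s t ω)
    (hU₂meas : ∀ s t, Measurable (U₂ s t))
    (hU₂nonneg : ∀ s t, s ≤ t → ∀ ω, 0 ≤ U₂ s t ω)
    -- MGF bounds
    (hU₁bound : ∀ s t, s ≤ t →
      ∫⁻ ω, ENNReal.ofReal (Real.exp (-θ * U₁ s t ω)) ∂P
        ≤ ENNReal.ofReal (Real.exp (θ * ρ₁ * ((t : ℝ) - (s : ℝ)) + θ * σ₁)))
    (hU₂bound : ∀ s t, s ≤ t →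
      ∫⁻ ω, ENNReal.ofReal (Real.exp (-θ * U₂ s t ω)) ∂P
        ≤ ENNReal.ofReal (Real.exp (θ * ρ₂ * ((t : ℝ) - (s : ℝ)) + θ * σ₂)))
    -- the rates differ
    (hne : ρ₁ ≠ ρ₂)
    -- stochastic independence of U₁ and U₂
    (hIndep : Indep (⨆ p : ℕ × ℕ, MeasurableSpace.comap (U₁ p.1 p.2) inferInstance)
      (⨆ p : ℕ × ℕ, MeasurableSpace.comap (U₂ p.1 p.2) inferInstance) P) :
    ∀ s t, s ≤ t →
      ∫⁻ ω, ENNReal.ofReal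
          (Real.exp (-θ * sInf ((fun r => U₁ s r ω + U₂ r t ω) '' Set.Icc s t))) ∂P
        ≤ ENNReal.ofReal (Real.exp (θ * max ρ₁ ρ₂ * ((t : ℝ) - (s : ℝ))
            + θ * (σ₁ + σ₂ - 1 / θ * Real.log (1 - Real.exp (-θ * |ρ₁ - ρ₂|))))) := by
  exact convolution_independent_general hθ (fun s t _ => (hU₁meas s t).aemeasurable)
    (fun s t _ => (hU₂meas s t).aemeasurable) hU₁bound hU₂bound hne
    fun s r t _ _ => indepFun_of_indep_iSup_comap hIndep (s, r) (r, t)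
end

section
/- (Output bound, dependent case.) Let θ > 0 and let p, q > 1 with 1/p + 1/q = 1. Let A be a flow and U a service process on a common probability space (not assumed independent), with A MGF-bounded for pθ with bounding functions (ρ_A, σ_A) and U MGF-bounded for qθ with bounding functions (ρ_U, σ_U). Let B be the output of a dynamic U-server with input A. If ρ_A(pθ) + ρ_U(qθ) < 0, then B is MGF-bounded for θ with bounding functions ρ_B(θ) = ρ_A(pθ) and σ_B(θ) = σ_A(pθ) + σ_U(qθ) − (1/θ)·log(1 − e^{θ(ρ_A(pθ)+ρ_U(qθ))}); that is, E[e^{θB(s,t)}] ≤ e^{θρ_A(pθ)(t−s) + θ(σ_A(pθ)+σ_U(qθ))} / (1 − e^{θ(ρ_A(pθ)+ρ_U(qθ))}) for all s ≤ t. -/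
open MeasureTheory ProbabilityTheory

/-!
If the minimum bounding `B s` from below is attained at `r ≤ s`, then `B t ≤ A t` gives
`B t - B s ≤ (A t - A r) - U r s`. Bounding the exponential of a maximum over `r` by the sum over
`r`, and separating the dependent `A` and `U` by Hölder's inequality, leaves a sum over `r ≤ s`
whose terms decay like `exp (θ * (ρA + ρU)) ^ (s - r)`: a geometric series with ratio below `1`.
-/

section Deterministic

lemma exists_le_of_csInf_image_le {ι α : Type*} [ConditionallyCompleteLinearOrder α]
    {S : Set ι} (hfin : S.Finite) (hne : S.Nonempty) {f : ι → α} {b : α}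
    (h : sInf (f '' S) ≤ b) : ∃ i ∈ S, f i ≤ b := by
  obtain ⟨i, hi, hfi⟩ := (hne.image f).csInf_mem (hfin.image f)
  exact ⟨i, hi, hfi.trans_le h⟩

/-- `B` is a possible output of a dynamic `U`-server fed with `A`. The relation is between single
sample paths: a stochastic server is required to satisfy it for almost every `ω`. -/
structure IsServerOutput (U : ℕ → ℕ → ℝ) (A B : ℕ → ℝ) : Prop where
  sInf_le (t : ℕ) : sInf ((fun s => A s + U s t) '' Set.Icc 0 t) ≤ B t
  le_input (t : ℕ) : B t ≤ A t

lemma IsServerOutput.exists_sub_le {U : ℕ → ℕ → ℝ} {A B : ℕ → ℝ} (h : IsServerOutput U A B)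
    (s t : ℕ) : ∃ r ≤ s, B t - B s ≤ A t - A r + -U r s := by
  obtain ⟨r, ⟨-, hrs⟩, hr⟩ := exists_le_of_csInf_image_le (Set.finite_Icc 0 s)
    (Set.nonempty_Icc.mpr s.zero_le) (h.sInf_le s)
  exact ⟨r, hrs, by linarith [h.le_input t]⟩

lemma sum_range_exp_mul_sub_le {a b : ℝ} (hab : a + b < 0) (c t : ℝ) (s : ℕ) :
    ∑ r ∈ Finset.range (s + 1), Real.exp (a * (t - r) + b * (s - r) + c)
      ≤ Real.exp (a * (t - s) + c) / (1 - Real.exp (a + b)) := by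
  have hterm : ∀ r ∈ Finset.range (s + 1), Real.exp (a * (t - r) + b * (s - r) + c)
      = Real.exp (a * (t - s) + c) * Real.exp (a + b) ^ (s - r) := by
    intro r hr
    rw [← Real.exp_nat_mul, ← Real.exp_add, Nat.cast_sub (Finset.mem_range_succ_iff.mp hr)]
    ring_nf
  rw [Finset.sum_congr rfl hterm, ← Finset.mul_sum,
    Finset.sum_flip (fun k => Real.exp (a + b) ^ k), div_eq_mul_inv]
  gcongr
  exact sum_le_hasSum _ (fun _ _ => by positivity)
    (hasSum_geometric_of_lt_one (Real.exp_pos _).le (Real.exp_lt_one_iff.mpr hab))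

end Deterministic

section ExponentialMoments

variable {Ω : Type*} [MeasurableSpace Ω] {μ : Measure Ω}

lemma lintegral_le_sum_lintegral_of_forall_exists_le {ι : Type*} {S : Finset ι}
    {f : Ω → ENNReal} {g : ι → Ω → ENNReal} (hg : ∀ i ∈ S, AEMeasurable (g i) μ)
    (hfg : ∀ᵐ ω ∂μ, ∃ i ∈ S, f ω ≤ g i ω) :
    ∫⁻ ω, f ω ∂μ ≤ ∑ i ∈ S, ∫⁻ ω, g i ω ∂μ := by
  rw [← lintegral_finsetSum' S hg]
  refine lintegral_mono_ae (hfg.mono fun ω ⟨i, hi, hfi⟩ => hfi.trans ?_)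
  exact Finset.single_le_sum (f := fun i => g i ω) (fun _ _ => zero_le) hi

lemma ofReal_exp_rpow (x r : ℝ) :
    ENNReal.ofReal (Real.exp x) ^ r = ENNReal.ofReal (Real.exp (r * x)) := by
  rw [ENNReal.ofReal_rpow_of_pos (Real.exp_pos x), ← Real.exp_mul, mul_comm]

lemma ofReal_exp_add (x y : ℝ) : ENNReal.ofReal (Real.exp (x + y))
    = ENNReal.ofReal (Real.exp x) * ENNReal.ofReal (Real.exp y) := by
  rw [Real.exp_add, ENNReal.ofReal_mul (Real.exp_pos x).le]

lemma lintegral_exp_add_le_of_holderConjugate {p q : ℝ} (hpq : p.HolderConjugate q)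
    {X Y : Ω → ℝ} (hX : AEMeasurable X μ) (hY : AEMeasurable Y μ) {a b : ℝ}
    (hXa : ∫⁻ ω, ENNReal.ofReal (Real.exp (p * X ω)) ∂μ ≤ ENNReal.ofReal (Real.exp (p * a)))
    (hYb : ∫⁻ ω, ENNReal.ofReal (Real.exp (q * Y ω)) ∂μ ≤ ENNReal.ofReal (Real.exp (q * b))) :
    ∫⁻ ω, ENNReal.ofReal (Real.exp (X ω + Y ω)) ∂μ ≤ ENNReal.ofReal (Real.exp (a + b)) := by
  have hp0 : 0 < p := hpq.pos
  have hq0 : 0 < q := hpq.symm.pos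
  calc ∫⁻ ω, ENNReal.ofReal (Real.exp (X ω + Y ω)) ∂μ
      = ∫⁻ ω, ENNReal.ofReal (Real.exp (X ω)) * ENNReal.ofReal (Real.exp (Y ω)) ∂μ := by
        simp only [ofReal_exp_add]
    _ ≤ (∫⁻ ω, ENNReal.ofReal (Real.exp (X ω)) ^ p ∂μ) ^ (1 / p)
          * (∫⁻ ω, ENNReal.ofReal (Real.exp (Y ω)) ^ q ∂μ) ^ (1 / q) :=
        ENNReal.lintegral_mul_le_Lp_mul_Lq μ hpq (by fun_prop) (by fun_prop)
    _ ≤ ENNReal.ofReal (Real.exp (p * a)) ^ (1 / p)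
          * ENNReal.ofReal (Real.exp (q * b)) ^ (1 / q) := by
        simp only [ofReal_exp_rpow _ p, ofReal_exp_rpow _ q]
        gcongr
    _ = ENNReal.ofReal (Real.exp (a + b)) := by
        rw [ofReal_exp_rpow, ofReal_exp_rpow, ← ofReal_exp_add]
        field_simp

/-- The bivariate process `X` is MGF-bounded for `θ`, where `ρ` and `σ` are the values at `θ` of the
bounding functions. A flow `A` is MGF-bounded when its increments `A(s,t)` are, a service process
`U` when `-U` is. The expectation is a lower Lebesgue integral, so that integrability is part of the
bound. -/
def MGFBounded (μ : Measure Ω) (θ ρ σ : ℝ) (X : ℕ → ℕ → Ω → ℝ) : Prop :=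
  ∀ s t, s ≤ t → ∫⁻ ω, ENNReal.ofReal (Real.exp (θ * X s t ω)) ∂μ
    ≤ ENNReal.ofReal (Real.exp (θ * ρ * ((t : ℝ) - (s : ℝ)) + θ * σ))

lemma MGFBounded.lintegral_exp_add_le {p q θ ρX σX ρY σY : ℝ} (hpq : p.HolderConjugate q)
    {X Y : ℕ → ℕ → Ω → ℝ} (hX : MGFBounded μ (p * θ) ρX σX X)
    (hY : MGFBounded μ (q * θ) ρY σY Y) {s t u v : ℕ} (hst : s ≤ t) (huv : u ≤ v)
    (hXmeas : AEMeasurable (X s t) μ) (hYmeas : AEMeasurable (Y u v) μ) :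
    ∫⁻ ω, ENNReal.ofReal (Real.exp (θ * (X s t ω + Y u v ω))) ∂μ
      ≤ ENNReal.ofReal
          (Real.exp (θ * ρX * ((t : ℝ) - s) + θ * ρY * ((v : ℝ) - u) + θ * (σX + σY))) := by
  have hHolder := lintegral_exp_add_le_of_holderConjugate hpq
    (hXmeas.const_mul θ) (hYmeas.const_mul θ)
    (a := θ * ρX * ((t : ℝ) - s) + θ * σX) (b := θ * ρY * ((v : ℝ) - u) + θ * σY)
    (by simpa only [mul_add, mul_assoc] using hX s t hst)
    (by simpa only [mul_add, mul_assoc] using hY u v huv)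
  convert hHolder using 3 <;> ring_nf

theorem output_bound_dependent_general {θ p q : ℝ} (hθ : 0 < θ) (hpq : p.HolderConjugate q)
    {A B : ℕ → Ω → ℝ} {U : ℕ → ℕ → Ω → ℝ} {ρA σA ρU σU : ℝ}
    (hAmeas : ∀ t, AEMeasurable (A t) μ) (hUmeas : ∀ s t, AEMeasurable (U s t) μ)
    (hA : MGFBounded μ (p * θ) ρA σA fun s t ω => A t ω - A s ω)
    (hU : MGFBounded μ (q * θ) ρU σU fun s t ω => -U s t ω)
    (hB : ∀ᵐ ω ∂μ, IsServerOutput (fun s t => U s t ω) (fun t => A t ω) (fun t => B t ω))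
    (hstab : ρA + ρU < 0) {s t : ℕ} (hst : s ≤ t) :
    ∫⁻ ω, ENNReal.ofReal (Real.exp (θ * (B t ω - B s ω))) ∂μ
      ≤ ENNReal.ofReal (Real.exp (θ * ρA * ((t : ℝ) - (s : ℝ)) + θ * (σA + σU))
          / (1 - Real.exp (θ * (ρA + ρU)))) := by
  have hmax : ∀ᵐ ω ∂μ, ∃ r ∈ Finset.range (s + 1),
      ENNReal.ofReal (Real.exp (θ * (B t ω - B s ω)))
        ≤ ENNReal.ofReal (Real.exp (θ * (A t ω - A r ω + -U r s ω))) := by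
    filter_upwards [hB] with ω hω
    obtain ⟨r, hrs, hr⟩ := hω.exists_sub_le s t
    exact ⟨r, Finset.mem_range_succ_iff.mpr hrs, by gcongr⟩
  have hrate : θ * ρA + θ * ρU < 0 := by
    rw [← mul_add]
    exact mul_neg_of_pos_of_neg hθ hstab
  calc ∫⁻ ω, ENNReal.ofReal (Real.exp (θ * (B t ω - B s ω))) ∂μ
      ≤ ∑ r ∈ Finset.range (s + 1),
          ∫⁻ ω, ENNReal.ofReal (Real.exp (θ * (A t ω - A r ω + -U r s ω))) ∂μ :=
        lintegral_le_sum_lintegral_of_forall_exists_le (fun _ _ => by fun_prop) hmax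
    _ ≤ ∑ r ∈ Finset.range (s + 1), ENNReal.ofReal
          (Real.exp (θ * ρA * ((t : ℝ) - r) + θ * ρU * ((s : ℝ) - r) + θ * (σA + σU))) := by
        refine Finset.sum_le_sum fun r hr => ?_
        have hrs : r ≤ s := Finset.mem_range_succ_iff.mp hr
        exact hA.lintegral_exp_add_le hpq hU (hrs.trans hst) hrs
          ((hAmeas t).sub (hAmeas r)) (hUmeas r s).neg
    _ ≤ ENNReal.ofReal (Real.exp (θ * ρA * ((t : ℝ) - s) + θ * (σA + σU))
          / (1 - Real.exp (θ * (ρA + ρU)))) := by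
        rw [← ENNReal.ofReal_sum_of_nonneg fun _ _ => (Real.exp_pos _).le, mul_add θ ρA ρU]
        exact ENNReal.ofReal_le_ofReal (sum_range_exp_mul_sub_le hrate _ t s)

end ExponentialMoments

/-- Output bound, dependent case: with Hölder parameters `p, q`,
if `A` is MGF-bounded for `pθ` with values `(ρA, σA) = (ρ_A(pθ), σ_A(pθ))` and
`U` is MGF-bounded for `qθ` with values `(ρU, σU) = (ρ_U(qθ), σ_U(qθ))`, then the output `B`
of a dynamic `U`-server with input `A` is MGF-bounded for `θ` with `ρ_B = ρA` and
`σ_B = σA + σU − (1/θ)·log(1 − e^{θ(ρA+ρU)})`. -/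
theorem output_bound_dependent
    {Ω : Type*} [MeasurableSpace Ω] (P : Measure Ω) [IsProbabilityMeasure P]
    (θ : ℝ) (hθ : 0 < θ)
    (p q : ℝ) (hp : 1 < p) (hq : 1 < q) (hpq : 1 / p + 1 / q = 1)
    (A B : ℕ → Ω → ℝ) (U : ℕ → ℕ → Ω → ℝ)
    (ρA σA ρU σU : ℝ)
    -- A is a flow
    (hAmeas : ∀ t, Measurable (A t))
    (hAmono : ∀ ω, Monotone fun t => A t ω)
    (hAzero : ∀ ω, A 0 ω = 0)
    -- U is a service process
    (hUmeas : ∀ s t, Measurable (U s t))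
    (hUnonneg : ∀ s t, s ≤ t → ∀ ω, 0 ≤ U s t ω)
    -- A is MGF-bounded for pθ, U is MGF-bounded for qθ
    (hAbound : ∀ s t, s ≤ t →
      ∫⁻ ω, ENNReal.ofReal (Real.exp (p * θ * (A t ω - A s ω))) ∂P
        ≤ ENNReal.ofReal (Real.exp (p * θ * ρA * ((t : ℝ) - (s : ℝ)) + p * θ * σA)))
    (hUbound : ∀ s t, s ≤ t →
      ∫⁻ ω, ENNReal.ofReal (Real.exp (-(q * θ) * U s t ω)) ∂P
        ≤ ENNReal.ofReal (Real.exp (q * θ * ρU * ((t : ℝ) - (s : ℝ)) + q * θ * σU)))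
    -- B is the output of a dynamic U-server with input A (and is a flow)
    (hBmeas : ∀ t, Measurable (B t))
    (hBmono : ∀ ω, Monotone fun t => B t ω)
    (hBzero : ∀ ω, B 0 ω = 0)
    (hServer : ∀ t ω, sInf ((fun s => A s ω + U s t ω) '' Set.Icc 0 t) ≤ B t ω)
    (hBleA : ∀ t ω, B t ω ≤ A t ω)
    -- stability condition
    (hstab : ρA + ρU < 0) :
    ∀ s t, s ≤ t →
      ∫⁻ ω, ENNReal.ofReal (Real.exp (θ * (B t ω - B s ω))) ∂P
        ≤ ENNReal.ofReal (Real.exp (θ * ρA * ((t : ℝ) - (s : ℝ)) + θ * (σA + σU))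
            / (1 - Real.exp (θ * (ρA + ρU)))) := by
  have hU : MGFBounded P (q * θ) ρU σU fun s t ω => -U s t ω := by
    simpa only [MGFBounded, mul_neg, neg_mul] using hUbound
  exact fun s t => output_bound_dependent_general hθ
    (Real.holderConjugate_iff.mpr ⟨hp, by simpa only [one_div] using hpq⟩)
    (fun t => (hAmeas t).aemeasurable) (fun s t => (hUmeas s t).aemeasurable) hAbound hU
    (ae_of_all P fun ω => ⟨fun t => hServer t ω, fun t => hBleA t ω⟩) hstab
end
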